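/- Assume f r ≥ 0 and Q r ≥ 0 for every r ∈ I, that Σ_{r : β r = b} f r = d b and d b > 0 for every b ∈ B. Then Nguyen's UEIP condition holds if and only if there exists μ : B → ℝ such that (i) for every r ∈ I, Q r > 0 implies c r ≥ μ(β r), and (ii) for every r ∈ I, f r > 0 implies μ(β r) ≥ c r. -/

import Mathlib

open Finset

/-- Equivalence between Nguyen's UEIP condition and the threshold conditions (13a)-(13b). -/
theorem stmt0 {I B : Type*} [Fintype I] [Fintype B] [DecidableEq B]
    (β : I → B) (d : B → ℝ) (f c Q : I → ℝ)
    (hf : ∀ r, 0 ≤ f r) (hQ : ∀ r, 0 ≤ Q r)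
    (hd : ∀ b, ∑ r ∈ univ.filter (fun r => β r = b), f r = d b)
    (hdpos : ∀ b, 0 < d b) :
    (∀ r : I, 0 < ∑ r' ∈ univ.filter (fun r' => β r' = β r ∧ c r' < c r), Q r' → f r = 0)
    ↔ ∃ μ : B → ℝ,
        (∀ r, 0 < Q r → μ (β r) ≤ c r) ∧
        (∀ r, 0 < f r → c r ≤ μ (β r)) := by
  constructor
  · intro h
    have hex : ∀ b, ∃ m, (β m = b ∧ 0 < f m) ∧ ∀ r, β r = b → 0 < f r → c r ≤ c m := by
      intro b
      have hne : (univ.filter (fun r => β r = b ∧ 0 < f r)).Nonempty := by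
        have h1 : 0 < ∑ r ∈ univ.filter (fun r => β r = b), f r := by
          rw [hd b]; exact hdpos b
        obtain ⟨r, hr, hr2⟩ := Finset.exists_lt_of_sum_lt
          (s := univ.filter (fun r => β r = b)) (f := fun _ => (0 : ℝ)) (g := f) (by simpa using h1)
        exact ⟨r, by simpa using ⟨by simpa using hr, hr2⟩⟩
      obtain ⟨m, hm, hmax⟩ := Finset.exists_max_image _ c hne
      refine ⟨m, by simpa using hm, fun r h1 h2 => hmax r (by simp [h1, h2])⟩
    choose m hm hmax using hex
    refine ⟨fun b => c (m b), ?_, fun r hr => hmax _ r rfl hr⟩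
    intro r hr
    by_contra hlt
    have hlt : c r < c (m (β r)) := not_le.mp hlt
    have h0 := h (m (β r)) (Finset.sum_pos' (fun i _ => hQ i)
      ⟨r, by simp [(hm (β r)).1, hlt], hr⟩)
    exact (hm (β r)).2.ne' h0
  · rintro ⟨μ, h1, h2⟩ r hr
    by_contra hne
    have hpos : 0 < f r := lt_of_le_of_ne (hf r) (Ne.symm hne)
    obtain ⟨r', hr', hq⟩ := Finset.exists_lt_of_sum_lt (f := fun _ => (0 : ℝ)) (g := Q)
      (s := univ.filter (fun r' => β r' = β r ∧ c r' < c r)) (by simpa using hr)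
    have hr' : β r' = β r ∧ c r' < c r := by simpa using hr'
    have a := h1 r' hq
    rw [hr'.1] at a
    linarith [h2 r hpos, hr'.2]
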